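/- arXiv:1709.02669 — 3 statements merged into one kernel-verified Lean document; each statement's English description precedes it below -/
import Mathlib

section
/- Let w, h : ℝ → ℝ be continuous, suppose there is T ≥ 0 with w(t) < 0 for all t ≥ T, suppose exp(−∫₀ᵗ w(s) ds) → ∞ as t → ∞, and suppose h(t)/w(t) → 0 as t → ∞. Then E(t) = exp(∫₀ᵗ w(s) ds) · ∫₀ᵗ h(τ)·exp(−∫₀^τ w(s) ds) dτ tends to 0 as t → ∞. -/
open Filter

/-! Multiplying `E' = w E + h` by the integrating factor `exp (-W)`, where `W' = w`, gives
`(exp (-W) E)' = exp (-W) h`, which is little-o of `(exp (-W))' = -w exp (-W) ≥ 0`. The `∞/∞` form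
of L'Hospital's rule, in the shape `f' = o(g') → f = o(g)`, integrates this relation to
`exp (-W) E = o(exp (-W))`, that is, `E → 0`. -/

open Asymptotics Set Topology

section

variable {V : Type*} [NormedAddCommGroup V] [NormedSpace ℝ V]

theorem norm_sub_le_const_mul_sub_of_hasDerivAt {f f' : ℝ → V} {g g' : ℝ → ℝ} {a b c : ℝ}
    (hab : a ≤ b) (hf : ∀ t ∈ Icc a b, HasDerivAt f (f' t) t)
    (hg : ∀ t ∈ Icc a b, HasDerivAt g (g' t) t) (hle : ∀ t ∈ Ico a b, ‖f' t‖ ≤ c * g' t) :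
    ‖f b - f a‖ ≤ c * (g b - g a) := by
  have hdf : ∀ t ∈ Icc a b, HasDerivAt (fun t => f t - f a) (f' t) t :=
    fun t ht => (hf t ht).sub_const _
  have hdg : ∀ t ∈ Icc a b, HasDerivAt (fun t => c * (g t - g a)) (c * g' t) t :=
    fun t ht => ((hg t ht).sub_const _).const_mul c
  exact image_norm_le_of_norm_deriv_right_le_deriv_boundary' (HasDerivAt.continuousOn hdf)
    (fun t ht => (hdf t (Ico_subset_Icc_self ht)).hasDerivWithinAt) (by simp)
    (HasDerivAt.continuousOn hdg)
    (fun t ht => (hdg t (Ico_subset_Icc_self ht)).hasDerivWithinAt) hle (right_mem_Icc.2 hab)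

theorem isLittleO_atTop_of_hasDerivAt {f f' : ℝ → V} {g g' : ℝ → ℝ}
    (hf : ∀ᶠ t in atTop, HasDerivAt f (f' t) t) (hg : ∀ᶠ t in atTop, HasDerivAt g (g' t) t)
    (hg' : ∀ᶠ t in atTop, 0 ≤ g' t) (hlim : Tendsto g atTop atTop) (hfg : f' =o[atTop] g') :
    f =o[atTop] g := by
  refine isLittleO_iff.2 fun c hc => ?_
  have hle : ∀ᶠ t in atTop, ‖f' t‖ ≤ c / 2 * g' t := by
    filter_upwards [hfg.def (half_pos hc), hg'] with t ht hpos
    rwa [Real.norm_of_nonneg hpos] at ht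
  obtain ⟨S, hS⟩ := eventually_atTop.1 (hf.and (hg.and hle))
  filter_upwards [eventually_ge_atTop S, hlim.eventually_ge_atTop 0,
    (hlim.const_mul_atTop (half_pos hc)).eventually_ge_atTop (‖f S‖ - c / 2 * g S)]
    with t hSt hpos hlarge
  have hgrowth : ‖f t - f S‖ ≤ c / 2 * (g t - g S) :=
    norm_sub_le_const_mul_sub_of_hasDerivAt hSt (fun s hs => (hS s hs.1).1)
      (fun s hs => (hS s hs.1).2.1) (fun s hs => (hS s hs.1).2.2)
  calc
    ‖f t‖ ≤ ‖f S‖ + ‖f t - f S‖ := norm_le_insert' _ _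
    _ ≤ ‖f S‖ + c / 2 * (g t - g S) := by gcongr
    _ ≤ c * g t := by linarith
    _ = c * ‖g t‖ := by rw [Real.norm_of_nonneg hpos]

theorem hasDerivAt_exp_neg_smul_of_linear {W : ℝ → ℝ} {E : ℝ → V} {w t : ℝ} {h : V}
    (hW : HasDerivAt W w t) (hE : HasDerivAt E (w • E t + h) t) :
    HasDerivAt (fun t => Real.exp (-W t) • E t) (Real.exp (-W t) • h) t := by
  convert hW.fun_neg.exp.fun_smul hE using 1
  module

theorem hasDerivAt_exp_integral_smul_integral [CompleteSpace V] {w : ℝ → ℝ} {h : ℝ → V}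
    (hw : Continuous w) (hh : Continuous h) (a t : ℝ) :
    HasDerivAt
      (fun t => Real.exp (∫ s in a..t, w s) • ∫ τ in a..t, Real.exp (-∫ s in a..τ, w s) • h τ)
      (w t • (Real.exp (∫ s in a..t, w s) • ∫ τ in a..t, Real.exp (-∫ s in a..τ, w s) • h τ) +
        h t) t := by
  have hW (t : ℝ) : HasDerivAt (fun t => ∫ s in a..t, w s) (w t) t :=
    (hw.integral_hasStrictDerivAt a t).hasDerivAt
  have hcont : Continuous fun τ => Real.exp (-∫ s in a..τ, w s) • h τ :=
    (continuous_iff_continuousAt.2 fun τ => (hW τ).continuousAt).neg.rexp.smul hh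
  convert (hW t).exp.fun_smul (hcont.integral_hasStrictDerivAt a t).hasDerivAt using 1
  rw [smul_smul (Real.exp _) (Real.exp _), ← Real.exp_add, add_neg_cancel, Real.exp_zero]
  module

theorem solution_tends_to_zero_general {w W : ℝ → ℝ} {h E : ℝ → V}
    (hW : ∀ᶠ t in atTop, HasDerivAt W (w t) t)
    (hE : ∀ᶠ t in atTop, HasDerivAt E (w t • E t + h t) t)
    (hw : ∀ᶠ t in atTop, w t ≤ 0)
    (hexp : Tendsto (fun t => Real.exp (-W t)) atTop atTop) (hh : h =o[atTop] w) :
    Tendsto E atTop (𝓝 0) := by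
  have hlittle : (fun t => Real.exp (-W t) • E t) =o[atTop] fun t => Real.exp (-W t) := by
    refine isLittleO_atTop_of_hasDerivAt ?_ (hW.mono fun t ht => ht.fun_neg.exp)
      (hw.mono fun t ht => mul_nonneg (Real.exp_nonneg _) (neg_nonneg.2 ht)) hexp
      ((isBigO_refl (fun t => Real.exp (-W t)) atTop).smul_isLittleO hh.neg_right)
    filter_upwards [hW, hE] with t hWt hEt
    exact hasDerivAt_exp_neg_smul_of_linear hWt hEt
  have hcancel (t : ℝ) : Real.exp (W t) * Real.exp (-W t) = 1 := by
    rw [← Real.exp_add, add_neg_cancel, Real.exp_zero]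
  simpa only [smul_smul, smul_eq_mul, hcancel, one_smul, isLittleO_one_iff] using
    (isBigO_refl (fun t => Real.exp (W t)) atTop).smul_isLittleO hlittle

end

/-- L'Hospital-type asymptotics: if `w t < 0` for large `t`, `exp (−∫₀ᵗ w) → ∞` and
`h t / w t → 0` as `t → ∞`, then
`E t = exp (∫₀ᵗ w) · ∫₀ᵗ h τ · exp (−∫₀^τ w) dτ → 0` as `t → ∞`. -/
theorem solution_tends_to_zero (w h : ℝ → ℝ) (hw : Continuous w) (hh : Continuous h)
    (T : ℝ) (hT : 0 ≤ T) (hwneg : ∀ t : ℝ, T ≤ t → w t < 0)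
    (hexp : Tendsto (fun t : ℝ => Real.exp (-∫ s in (0 : ℝ)..t, w s)) atTop atTop)
    (hquot : Tendsto (fun t : ℝ => h t / w t) atTop (nhds 0))
    (E : ℝ → ℝ)
    (hE : ∀ t : ℝ, E t = Real.exp (∫ s in (0 : ℝ)..t, w s) *
      ∫ τ in (0 : ℝ)..t, h τ * Real.exp (-∫ s in (0 : ℝ)..τ, w s)) :
    Tendsto E atTop (nhds 0) := by
  have hode (t : ℝ) : HasDerivAt E (w t • E t + h t) t := by
    simpa only [smul_eq_mul, mul_comm (Real.exp (-_)), ← hE] using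
      hasDerivAt_exp_integral_smul_integral hw hh 0 t
  exact solution_tends_to_zero_general
    (.of_forall fun t => (hw.integral_hasStrictDerivAt 0 t).hasDerivAt) (.of_forall hode)
    (eventually_atTop.2 ⟨T, fun t ht => (hwneg t ht).le⟩) hexp ((isLittleO_iff_tendsto'
      (eventually_atTop.2 ⟨T, fun t ht h0 => absurd h0 (hwneg t ht).ne⟩)).2 hquot)
end

section
/- Let w : ℝ → ℝ be continuous with w(t) ≤ −c for all t ≥ 0 and some constant c > 0, and let λ̃₂ < 0. Then every differentiable solution (e₁, e₂) : [0,∞) → ℝ² of the closed-loop system ė₁ = w(t)·e₁ + λ̃₂·e₂, ė₂ = λ̃₂·e₂ satisfies e₁(t) → 0 and e₂(t) → 0 as t → ∞, for every initial condition (e₁(0), e₂(0)) ∈ ℝ². -/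
open Filter

/-!
The closed loop is a cascade. The `e₂`-equation is autonomous and exponentially stable, and `e₂`
enters the `e₁`-equation as a vanishing input, so `e₁ → 0` because an equation with uniform decay
rate `c` is input-to-state stable: along `ė = f + u` with `⟪e, f⟫ ≤ -c ‖e‖²`, Young's inequality
gives `d/dt ‖e‖² ≤ -c ‖e‖² + ‖u‖² / c`, and Grönwall's inequality bounds `limsup ‖e‖²` by every
eventual bound of `‖u‖² / c²`.
-/

section ScalarComparison

variable {K ε : ℝ} {V V' : ℝ → ℝ}

lemma tendsto_gronwallBound_of_neg (δ : ℝ) (hK : K < 0) (ε : ℝ) :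
    Tendsto (gronwallBound δ K ε) atTop (nhds (-(ε / K))) := by
  have hexp : Tendsto (fun t ↦ Real.exp (K * t)) atTop (nhds 0) :=
    Real.tendsto_exp_atBot.comp (tendsto_id.const_mul_atTop_of_neg hK)
  rw [gronwallBound_of_K_ne_0 hK.ne]
  simpa using (hexp.const_mul δ).add ((hexp.sub_const 1).const_mul (ε / K))

lemma le_gronwallBound_of_hasDerivAt {a b : ℝ}
    (hV : ∀ t ∈ Set.Icc a b, HasDerivAt V (V' t) t)
    (hbound : ∀ t ∈ Set.Ico a b, V' t ≤ K * V t + ε) {t : ℝ} (ht : t ∈ Set.Icc a b) :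
    V t ≤ gronwallBound (V a) K ε (t - a) :=
  le_gronwallBound_of_liminf_deriv_right_le
    (fun s hs ↦ (hV s hs).continuousAt.continuousWithinAt)
    (fun s hs _ ↦ (hV s (Set.Ico_subset_Icc_self hs)).hasDerivWithinAt.liminf_right_slope_le)
    le_rfl hbound t ht

lemma eventually_lt_of_hasDerivAt_le (hK : K < 0)
    (hV : ∀ᶠ t in atTop, HasDerivAt V (V' t) t)
    (hbound : ∀ᶠ t in atTop, V' t ≤ K * V t + ε) {b : ℝ} (hb : -(ε / K) < b) :
    ∀ᶠ t in atTop, V t < b := by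
  obtain ⟨a, ha⟩ := eventually_atTop.1 (hV.and hbound)
  have hlim : Tendsto (fun t ↦ gronwallBound (V a) K ε (t - a)) atTop (nhds (-(ε / K))) :=
    (tendsto_gronwallBound_of_neg (V a) hK ε).comp (tendsto_atTop_add_const_right _ (-a) tendsto_id)
  filter_upwards [hlim.eventually_lt_const hb, eventually_ge_atTop a] with t hlt hat
  exact (le_gronwallBound_of_hasDerivAt (fun s hs ↦ (ha s hs.1).1) (fun s hs ↦ (ha s hs.1).2)
    (Set.right_mem_Icc.2 hat)).trans_lt hlt

lemma tendsto_zero_of_hasDerivAt_le {g : ℝ → ℝ} (hK : K < 0) (hnonneg : ∀ᶠ t in atTop, 0 ≤ V t)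
    (hV : ∀ᶠ t in atTop, HasDerivAt V (V' t) t)
    (hbound : ∀ᶠ t in atTop, V' t ≤ K * V t + g t) (hg : Tendsto g atTop (nhds 0)) :
    Tendsto V atTop (nhds 0) := by
  refine tendsto_order.2 ⟨fun b hb ↦ hnonneg.mono fun t ht ↦ hb.trans_le ht, fun b hb ↦ ?_⟩
  have hε : 0 < -K * (b / 2) := mul_pos (neg_pos.2 hK) (half_pos hb)
  have hlimit : -(-K * (b / 2) / K) < b := by
    rw [neg_mul, neg_div, neg_neg, mul_div_cancel_left₀ _ hK.ne]
    exact half_lt_self hb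
  refine eventually_lt_of_hasDerivAt_le hK hV ?_ hlimit
  filter_upwards [hbound, hg.eventually_le_const hε] with t hVt hgt
  exact hVt.trans (add_le_add_right hgt _)

end ScalarComparison

section Cascade

variable {E F : Type*} [NormedAddCommGroup E] [InnerProductSpace ℝ E]
  [NormedAddCommGroup F] [InnerProductSpace ℝ F] {c : ℝ}

lemma two_mul_inner_add_le {x f u : E} (hc : 0 < c) (hf : inner ℝ x f ≤ -c * ‖x‖ ^ 2) :
    2 * inner ℝ x (f + u) ≤ -c * ‖x‖ ^ 2 + ‖u‖ ^ 2 / c := by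
  have young : 2 * (‖x‖ * ‖u‖) ≤ c * ‖x‖ ^ 2 + ‖u‖ ^ 2 / c := by
    have hsq : 0 ≤ (c * ‖x‖ - ‖u‖) ^ 2 / c := by positivity
    have hexpand : (c * ‖x‖ - ‖u‖) ^ 2 / c
        = c * ‖x‖ ^ 2 + ‖u‖ ^ 2 / c - 2 * (‖x‖ * ‖u‖) := by
      field_simp
      ring
    linarith
  rw [inner_add_right]
  linarith [real_inner_le_norm x u]

lemma tendsto_zero_of_inner_le_of_tendsto_zero {e f u : ℝ → E} (hc : 0 < c)
    (he : ∀ᶠ t in atTop, HasDerivAt e (f t + u t) t)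
    (hf : ∀ᶠ t in atTop, inner ℝ (e t) (f t) ≤ -c * ‖e t‖ ^ 2)
    (hu : Tendsto u atTop (nhds 0)) :
    Tendsto e atTop (nhds 0) := by
  have hinput : Tendsto (fun t ↦ ‖u t‖ ^ 2 / c) atTop (nhds 0) := by
    simpa using (hu.norm.pow 2).div_const c
  have hnormSq : Tendsto (fun t ↦ ‖e t‖ ^ 2) atTop (nhds 0) :=
    tendsto_zero_of_hasDerivAt_le (neg_neg_of_pos hc) (.of_forall fun t ↦ sq_nonneg ‖e t‖)
      (he.mono fun t ht ↦ ht.norm_sq) (hf.mono fun t ht ↦ two_mul_inner_add_le hc ht) hinput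
  rw [tendsto_zero_iff_norm_tendsto_zero]
  simpa using hnormSq.sqrt

lemma inner_smul_self_le {a : ℝ} (ha : a ≤ -c) (x : E) :
    inner ℝ x (a • x) ≤ -c * ‖x‖ ^ 2 := by
  rw [real_inner_smul_right, real_inner_self_eq_norm_sq]
  gcongr

theorem example_global_asymptotic_tracking_general {w : ℝ → ℝ} (hc : 0 < c)
    (hw : ∀ᶠ t in atTop, w t ≤ -c) {lam2 : ℝ} (hlam2 : lam2 < 0) (B : F →L[ℝ] E)
    {e₁ : ℝ → E} {e₂ : ℝ → F}
    (he₁ : ∀ᶠ t in atTop, HasDerivAt e₁ (w t • e₁ t + B (e₂ t)) t)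
    (he₂ : ∀ᶠ t in atTop, HasDerivAt e₂ (lam2 • e₂ t) t) :
    Tendsto e₁ atTop (nhds 0) ∧ Tendsto e₂ atTop (nhds 0) := by
  have h₂ : Tendsto e₂ atTop (nhds 0) :=
    tendsto_zero_of_inner_le_of_tendsto_zero (u := 0) (neg_pos.2 hlam2) (by simpa using he₂)
      (.of_forall fun t ↦ inner_smul_self_le (neg_neg lam2).ge (e₂ t)) tendsto_const_nhds
  have hcoupling : Tendsto (fun t ↦ B (e₂ t)) atTop (nhds 0) :=
    (B.continuous.tendsto' 0 0 (map_zero B)).comp h₂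
  exact ⟨tendsto_zero_of_inner_le_of_tendsto_zero hc he₁
    (hw.mono fun t ht ↦ inner_smul_self_le ht (e₁ t)) hcoupling, h₂⟩

end Cascade

/-- Global asymptotic tracking for the example: if `w t ≤ -c < 0` for all `t ≥ 0` and
`λ̃₂ < 0`, then every solution of the closed loop `ė₁ = w t · e₁ + λ̃₂ e₂`, `ė₂ = λ̃₂ e₂`
tends to the origin as `t → ∞`, for every initial condition. -/
theorem example_global_asymptotic_tracking (w : ℝ → ℝ) (hw : Continuous w)
    (c : ℝ) (hc : 0 < c) (hwneg : ∀ t : ℝ, 0 ≤ t → w t ≤ -c)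
    (lam2 : ℝ) (hlam2 : lam2 < 0) :
    ∀ e₁ e₂ : ℝ → ℝ,
      (∀ t : ℝ, 0 ≤ t →
        HasDerivAt e₁ (w t * e₁ t + lam2 * e₂ t) t ∧ HasDerivAt e₂ (lam2 * e₂ t) t) →
      Tendsto e₁ atTop (nhds 0) ∧ Tendsto e₂ atTop (nhds 0) := by
  intro e₁ e₂ h
  have hsol := (eventually_ge_atTop (0 : ℝ)).mono h
  exact example_global_asymptotic_tracking_general hc ((eventually_ge_atTop 0).mono hwneg) hlam2
    (lam2 • ContinuousLinearMap.id ℝ ℝ) (hsol.mono fun _ ht ↦ ht.1) (hsol.mono fun _ ht ↦ ht.2)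
end

section
/- Let λ̃₁, λ̃₂ < 0. The origin is stable in the sense of Lyapunov for the closed-loop chained system ẋ₁ = λ̃₁·x₁, ẋ₂ = λ̃₂·x₂, ẋ₃ = λ̃₁·x₁·x₂: for every ε > 0 there exists δ > 0 such that every differentiable solution x : [0,∞) → ℝ³ of this system with |x(0)| < δ satisfies |x(t)| ≤ ε for all t ≥ 0. -/
/-!
The first two coordinates are `xᵢ t = exp (λ̃ᵢ t) xᵢ 0`, so they do not grow, and
`|ẋ₃ t| ≤ |x₁ 0 * x₂ 0| * (-λ̃₁ exp (λ̃₁ t))`. The right-hand side is the derivative of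
`|x₁ 0 * x₂ 0| * (1 - exp (λ̃₁ t))`, so the total drift of `x₃` is at most
`|x₁ 0 * x₂ 0| ≤ |x 0| ^ 2 / 2`. Hence `|x t| ≤ |x 0| + |x 0| ^ 2 / 2`.
-/

section ExponentialBounds

open Real Set

theorem hasDerivAt_exp_mul_sub (a k t : ℝ) :
    HasDerivAt (fun s ↦ exp (k * (s - a))) (k * exp (k * (t - a))) t := by
  simpa [mul_comm] using (((hasDerivAt_id t).sub_const a).const_mul k).exp

variable {E : Type*} [NormedAddCommGroup E] [NormedSpace ℝ E] {a k t : ℝ}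

theorem eq_exp_smul_of_hasDerivWithinAt_smul {x : ℝ → E}
    (hx : ∀ s, a ≤ s → HasDerivWithinAt x (k • x s) (Ici a) s) (ht : a ≤ t) :
    x t = exp (k * (t - a)) • x a := by
  refine ODE_solution_unique (v := fun _ y ↦ k • y) (g := fun s ↦ exp (k * (s - a)) • x a)
    (fun _ ↦ lipschitzWith_smul k)
    (fun s hs ↦ ((hx s hs.1).mono Icc_subset_Ici_self).continuousWithinAt)
    (fun s hs ↦ (hx s hs.1).mono (Ici_subset_Ici.2 hs.1))
    (Continuous.continuousOn (by fun_prop)) (fun s _ ↦ ?_) (by simp) (right_mem_Icc.2 ht)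
  simpa only [mul_smul] using ((hasDerivAt_exp_mul_sub a k s).smul_const (x a)).hasDerivWithinAt

theorem norm_eq_exp_mul_norm_of_hasDerivWithinAt_smul {x : ℝ → E}
    (hx : ∀ s, a ≤ s → HasDerivWithinAt x (k • x s) (Ici a) s) (ht : a ≤ t) :
    ‖x t‖ = exp (k * (t - a)) * ‖x a‖ := by
  rw [eq_exp_smul_of_hasDerivWithinAt_smul hx ht, norm_smul, norm_eq_abs, abs_exp]

theorem norm_le_norm_of_hasDerivWithinAt_smul {x : ℝ → E}
    (hx : ∀ s, a ≤ s → HasDerivWithinAt x (k • x s) (Ici a) s) (hk : k ≤ 0) (ht : a ≤ t) :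
    ‖x t‖ ≤ ‖x a‖ := by
  rw [norm_eq_exp_mul_norm_of_hasDerivWithinAt_smul hx ht]
  exact mul_le_of_le_one_left (norm_nonneg _)
    (exp_le_one_iff.2 (mul_nonpos_of_nonpos_of_nonneg hk (sub_nonneg.2 ht)))

theorem norm_sub_le_of_norm_deriv_le_exp {f f' : ℝ → E} {C : ℝ}
    (hf : ∀ s, a ≤ s → HasDerivWithinAt f (f' s) (Ici a) s)
    (bound : ∀ s, a ≤ s → ‖f' s‖ ≤ C * (-k * exp (k * (s - a)))) (ht : a ≤ t) :
    ‖f t - f a‖ ≤ C * (1 - exp (k * (t - a))) := by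
  refine image_norm_le_of_norm_deriv_right_le_deriv_boundary (f := fun s ↦ f s - f a) (f' := f')
    (B := fun s ↦ C * (1 - exp (k * (s - a)))) (B' := fun s ↦ C * (-k * exp (k * (s - a))))
    (fun s hs ↦ (((hf s hs.1).mono Icc_subset_Ici_self).sub_const _).continuousWithinAt)
    (fun s hs ↦ ((hf s hs.1).mono (Ici_subset_Ici.2 hs.1)).sub_const _)
    (by simp) (fun s ↦ ?_) (fun s hs ↦ bound s hs.1) (right_mem_Icc.2 ht)
  simpa only [neg_mul] using ((hasDerivAt_exp_mul_sub a k s).const_sub 1).const_mul C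

end ExponentialBounds

theorem sqrt_sum_sq_le_add_abs_sub {a b c a' b' c' : ℝ} (ha : |a'| ≤ |a|) (hb : |b'| ≤ |b|) :
    √(a' ^ 2 + b' ^ 2 + c' ^ 2) ≤ √(a ^ 2 + b ^ 2 + c ^ 2) + |c' - c| := by
  have hc : |c| ≤ √(a ^ 2 + b ^ 2 + c ^ 2) := Real.abs_le_sqrt (by nlinarith)
  have cross : c * (c' - c) ≤ √(a ^ 2 + b ^ 2 + c ^ 2) * |c' - c| :=
    (le_abs_self _).trans (by rw [abs_mul]; gcongr)
  refine Real.sqrt_le_iff.2 ⟨by positivity, ?_⟩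
  calc a' ^ 2 + b' ^ 2 + c' ^ 2
      ≤ a ^ 2 + b ^ 2 + c' ^ 2 := by gcongr ?_ + ?_ + _ <;> exact sq_le_sq.2 ‹_›
    _ = (a ^ 2 + b ^ 2 + c ^ 2) + 2 * (c * (c' - c)) + (c' - c) ^ 2 := by ring
    _ ≤ (a ^ 2 + b ^ 2 + c ^ 2) + 2 * (√(a ^ 2 + b ^ 2 + c ^ 2) * |c' - c|) + (c' - c) ^ 2 := by
      gcongr
    _ = (√(a ^ 2 + b ^ 2 + c ^ 2) + |c' - c|) ^ 2 := by
      rw [add_sq, Real.sq_sqrt (by positivity), sq_abs, mul_assoc]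

/-- Solutions on `[0, ∞)` of the chained system `ẋ = (u₁, u₂, x₂ u₁)` under the feedback
`u = (k₁ x₁, k₂ x₂)`. The derivative at `0` is one-sided, so the values of the `xᵢ` at negative
times are irrelevant. -/
structure IsChainedSystemSolution (k₁ k₂ : ℝ) (x₁ x₂ x₃ : ℝ → ℝ) : Prop where
  hasDerivWithinAt_fst : ∀ t, 0 ≤ t → HasDerivWithinAt x₁ (k₁ * x₁ t) (Set.Ici 0) t
  hasDerivWithinAt_snd : ∀ t, 0 ≤ t → HasDerivWithinAt x₂ (k₂ * x₂ t) (Set.Ici 0) t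
  hasDerivWithinAt_trd : ∀ t, 0 ≤ t → HasDerivWithinAt x₃ (k₁ * x₁ t * x₂ t) (Set.Ici 0) t

namespace IsChainedSystemSolution

variable {k₁ k₂ t : ℝ} {x₁ x₂ x₃ : ℝ → ℝ}

theorem abs_fst_le (h : IsChainedSystemSolution k₁ k₂ x₁ x₂ x₃) (hk₁ : k₁ ≤ 0) (ht : 0 ≤ t) :
    |x₁ t| ≤ |x₁ 0| :=
  norm_le_norm_of_hasDerivWithinAt_smul h.hasDerivWithinAt_fst hk₁ ht

theorem abs_snd_le (h : IsChainedSystemSolution k₁ k₂ x₁ x₂ x₃) (hk₂ : k₂ ≤ 0) (ht : 0 ≤ t) :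
    |x₂ t| ≤ |x₂ 0| :=
  norm_le_norm_of_hasDerivWithinAt_smul h.hasDerivWithinAt_snd hk₂ ht

theorem abs_trd_sub_le (h : IsChainedSystemSolution k₁ k₂ x₁ x₂ x₃) (hk₁ : k₁ ≤ 0)
    (hk₂ : k₂ ≤ 0) (ht : 0 ≤ t) : |x₃ t - x₃ 0| ≤ |x₁ 0 * x₂ 0| := by
  have bound (s : ℝ) (hs : 0 ≤ s) :
      ‖k₁ * x₁ s * x₂ s‖ ≤ |x₁ 0 * x₂ 0| * (-k₁ * Real.exp (k₁ * (s - 0))) :=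
    calc ‖k₁ * x₁ s * x₂ s‖
        = ‖k₁ * x₁ s‖ * |x₂ s| := norm_mul _ _
      _ ≤ ‖k₁ * x₁ s‖ * |x₂ 0| :=
          mul_le_mul_of_nonneg_left (h.abs_snd_le hk₂ hs) (norm_nonneg _)
      _ = -k₁ * (Real.exp (k₁ * (s - 0)) * |x₁ 0|) * |x₂ 0| := by
          rw [norm_mul, norm_eq_exp_mul_norm_of_hasDerivWithinAt_smul h.hasDerivWithinAt_fst hs,
            Real.norm_of_nonpos hk₁, Real.norm_eq_abs]
      _ = |x₁ 0 * x₂ 0| * (-k₁ * Real.exp (k₁ * (s - 0))) := by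
          rw [abs_mul]; ring
  exact (norm_sub_le_of_norm_deriv_le_exp h.hasDerivWithinAt_trd bound ht).trans
    (mul_le_of_le_one_right (abs_nonneg _) (sub_le_self _ (Real.exp_nonneg _)))

theorem sqrt_sum_sq_le (h : IsChainedSystemSolution k₁ k₂ x₁ x₂ x₃) (hk₁ : k₁ ≤ 0)
    (hk₂ : k₂ ≤ 0) (ht : 0 ≤ t) :
    √(x₁ t ^ 2 + x₂ t ^ 2 + x₃ t ^ 2) ≤
      √(x₁ 0 ^ 2 + x₂ 0 ^ 2 + x₃ 0 ^ 2) + √(x₁ 0 ^ 2 + x₂ 0 ^ 2 + x₃ 0 ^ 2) ^ 2 / 2 := by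
  have drift_le :=
    calc |x₃ t - x₃ 0|
        ≤ |x₁ 0| * |x₂ 0| := (h.abs_trd_sub_le hk₁ hk₂ ht).trans_eq (abs_mul _ _)
      _ ≤ (x₁ 0 ^ 2 + x₂ 0 ^ 2) / 2 := by
        linarith [two_mul_le_add_sq |x₁ 0| |x₂ 0|, sq_abs (x₁ 0), sq_abs (x₂ 0)]
      _ ≤ √(x₁ 0 ^ 2 + x₂ 0 ^ 2 + x₃ 0 ^ 2) ^ 2 / 2 := by
        rw [Real.sq_sqrt (by positivity)]
        linarith [sq_nonneg (x₃ 0)]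
  exact (sqrt_sum_sq_le_add_abs_sub (h.abs_fst_le hk₁ ht) (h.abs_snd_le hk₂ ht)).trans
    (by gcongr)

end IsChainedSystemSolution

theorem chained_system_lyapunov_stable_general {k₁ k₂ : ℝ} (hk₁ : k₁ ≤ 0) (hk₂ : k₂ ≤ 0)
    (ε : ℝ) (hε : 0 < ε) :
    ∃ δ : ℝ, 0 < δ ∧ ∀ x₁ x₂ x₃ : ℝ → ℝ, IsChainedSystemSolution k₁ k₂ x₁ x₂ x₃ →
      √(x₁ 0 ^ 2 + x₂ 0 ^ 2 + x₃ 0 ^ 2) < δ →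
      ∀ t : ℝ, 0 ≤ t → √(x₁ t ^ 2 + x₂ t ^ 2 + x₃ t ^ 2) ≤ ε := by
  refine ⟨min 1 (ε / 2), by positivity, fun x₁ x₂ x₃ h h₀ t ht ↦ ?_⟩
  set r := √(x₁ 0 ^ 2 + x₂ 0 ^ 2 + x₃ 0 ^ 2)
  obtain ⟨hr_one, hr_ε⟩ := lt_min_iff.1 h₀
  have hr_sq : r ^ 2 ≤ r := pow_le_of_le_one (Real.sqrt_nonneg _) hr_one.le two_ne_zero
  linarith [h.sqrt_sum_sq_le hk₁ hk₂ ht]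

/-- Lyapunov stability of the origin for the closed-loop chained system
`ẋ₁ = λ̃₁ x₁, ẋ₂ = λ̃₂ x₂, ẋ₃ = λ̃₁ x₁ x₂` (with `λ̃₁, λ̃₂ < 0`): for every `ε > 0` there is
`δ > 0` such that every solution with Euclidean norm of the initial state `< δ` stays within
Euclidean norm `ε` for all `t ≥ 0`. -/
theorem chained_system_lyapunov_stable (lam1 lam2 : ℝ) (h1 : lam1 < 0) (h2 : lam2 < 0) :
    ∀ ε : ℝ, 0 < ε → ∃ δ : ℝ, 0 < δ ∧
      ∀ x1 x2 x3 : ℝ → ℝ,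
        (∀ t : ℝ, 0 ≤ t →
          HasDerivAt x1 (lam1 * x1 t) t ∧
          HasDerivAt x2 (lam2 * x2 t) t ∧
          HasDerivAt x3 (lam1 * x1 t * x2 t) t) →
        Real.sqrt (x1 0 ^ 2 + x2 0 ^ 2 + x3 0 ^ 2) < δ →
        ∀ t : ℝ, 0 ≤ t → Real.sqrt (x1 t ^ 2 + x2 t ^ 2 + x3 t ^ 2) ≤ ε := by
  intro ε hε
  obtain ⟨δ, hδ, stable⟩ := chained_system_lyapunov_stable_general h1.le h2.le ε hε
  exact ⟨δ, hδ, fun x1 x2 x3 h ↦ stable x1 x2 x3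
    ⟨fun t ht ↦ (h t ht).1.hasDerivWithinAt, fun t ht ↦ (h t ht).2.1.hasDerivWithinAt,
      fun t ht ↦ (h t ht).2.2.hasDerivWithinAt⟩⟩
end
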